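/- Let 0 < α < 1. There exists a constant C > 0 such that for every Schwartz vector field u : ℝ³ → ℝ³ with div u = 0 and vorticity ω = curl u, |∫_{ℝ³} ((ω·∇)u) · ω dx| ≤ (1/2) ‖∇ω‖_{L²}² + C ‖ω‖_{L²}² (‖ω‖_{Ḃ^{−1−α}_{∞,∞}}^{2/(1−α)} + ‖ω‖_{Ḃ^{−α}_{∞,∞}}^{2/(2−α)}), the inequality holding in [0,∞]. -/

import Mathlib

open MeasureTheory Real Complex Filter Function
open scoped ENNReal FourierTransform SchwartzMap

noncomputable section

/-- The properties of the radial smooth cutoff `χ` used to build the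
Littlewood–Paley decomposition: smooth, compactly supported, radial,
`0 ≤ χ ≤ 1`, `χ = 1` on `{‖ξ‖ ≤ 3/4}` and `χ = 0` on `{‖ξ‖ > 4/3}`. -/
def IsLPCutoff {n : ℕ} (χ : EuclideanSpace ℝ (Fin n) → ℝ) : Prop :=
  ContDiff ℝ ((⊤ : ℕ∞) : WithTop ℕ∞) χ ∧ HasCompactSupport χ ∧
    (∀ ξ η, ‖ξ‖ = ‖η‖ → χ ξ = χ η) ∧ (∀ ξ, 0 ≤ χ ξ) ∧ (∀ ξ, χ ξ ≤ 1) ∧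
    (∀ ξ, ‖ξ‖ ≤ 3 / 4 → χ ξ = 1) ∧ (∀ ξ, 4 / 3 < ‖ξ‖ → χ ξ = 0)

/-- The low-frequency Littlewood–Paley projection `S_j f = 𝓕⁻¹(χ(·/2^j) 𝓕 f)`. -/
def Sproj {n : ℕ} (χ : EuclideanSpace ℝ (Fin n) → ℝ) (j : ℤ)
    (f : EuclideanSpace ℝ (Fin n) → ℂ) : EuclideanSpace ℝ (Fin n) → ℂ :=
  𝓕⁻ fun ξ => ((χ ((2 : ℝ) ^ (-j) • ξ) : ℝ) : ℂ) * 𝓕 f ξ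

/-- The Littlewood–Paley block `Δ_j f = 𝓕⁻¹(φ̂(·/2^j) 𝓕 f)`, where
`φ̂(ξ) = χ(ξ/2) - χ(ξ)`, i.e. `φ̂(ξ/2^j) = χ(ξ/2^(j+1)) - χ(ξ/2^j)`. -/
def Dproj {n : ℕ} (χ : EuclideanSpace ℝ (Fin n) → ℝ) (j : ℤ)
    (f : EuclideanSpace ℝ (Fin n) → ℂ) : EuclideanSpace ℝ (Fin n) → ℂ :=
  𝓕⁻ fun ξ => ((χ ((2 : ℝ) ^ (-(j + 1)) • ξ) - χ ((2 : ℝ) ^ (-j) • ξ) : ℝ) : ℂ) * 𝓕 f ξ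

/-- The `ℓ^q(ℤ)` norm of a sequence of extended nonnegative reals, with the usual
supremum modification for `q = ∞`. -/
def lqNorm (q : ℝ≥0∞) (a : ℤ → ℝ≥0∞) : ℝ≥0∞ :=
  if q = ∞ then ⨆ j, a j else (∑' j, a j ^ q.toReal) ^ (1 / q.toReal)

/-- The homogeneous Besov norm `‖f‖_{Ḃ^s_{p,q}}`, valued in `[0,∞]`. -/
def besovNorm {n : ℕ} (χ : EuclideanSpace ℝ (Fin n) → ℝ) (s : ℝ) (p q : ℝ≥0∞)
    (f : EuclideanSpace ℝ (Fin n) → ℂ) : ℝ≥0∞ :=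
  lqNorm q fun j => (2 : ℝ≥0∞) ^ ((j : ℝ) * s) * eLpNorm (Dproj χ j f) p volume
noncomputable section

/-- Abbreviation for the Euclidean space `ℝ³`. -/
abbrev E3 := EuclideanSpace ℝ (Fin 3)

/-- The partial derivative `∂ᵢ f` in the `i`-th coordinate direction. -/
def pd (i : Fin 3) (f : E3 → ℝ) : E3 → ℝ :=
  fun x => fderiv ℝ f x (EuclideanSpace.single i 1)

/-- The curl `∇ × u = (∂₂u³ - ∂₃u², ∂₃u¹ - ∂₁u³, ∂₁u² - ∂₂u¹)` of a vector field on `ℝ³`. -/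
def curl3 (u : Fin 3 → E3 → ℝ) : Fin 3 → E3 → ℝ :=
  ![fun x => pd 1 (u 2) x - pd 2 (u 1) x,
    fun x => pd 2 (u 0) x - pd 0 (u 2) x,
    fun x => pd 0 (u 1) x - pd 1 (u 0) x]

/-- The curl of a Schwartz vector field on `ℝ³`. -/
def curlS (u : Fin 3 → 𝓢(E3, ℝ)) : Fin 3 → E3 → ℝ :=
  curl3 fun i => ⇑(u i)

/-- The `L²` norm of a vector field (the `ℓ²` combination of the componentwise norms),
valued in `[0,∞]`. -/
def vecL2 (v : Fin 3 → E3 → ℝ) : ℝ≥0∞ :=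
  (∑ i : Fin 3, eLpNorm (v i) 2 volume ^ (2 : ℝ)) ^ (1 / 2 : ℝ)

/-- The `L²` norm `‖∇v‖_{L²}` of the gradient of a vector field,
`‖∇v‖_{L²}² = Σ_{i,j} ‖∂ᵢ vʲ‖_{L²}²`, valued in `[0,∞]`. -/
def gradL2 (v : Fin 3 → E3 → ℝ) : ℝ≥0∞ :=
  (∑ i : Fin 3, ∑ j : Fin 3, eLpNorm (pd i (v j)) 2 volume ^ (2 : ℝ)) ^ (1 / 2 : ℝ)

/-- The homogeneous Besov norm `‖v‖_{Ḃ^s_{∞,∞}} = sup_j 2^{js} ‖Δ_j v‖_{L^∞}` of a real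
vector field on `ℝ³`, taken as the maximum (supremum) over the components. -/
def vecBesovInf (χ : E3 → ℝ) (s : ℝ) (v : Fin 3 → E3 → ℝ) : ℝ≥0∞ :=
  ⨆ i : Fin 3, ⨆ j : ℤ,
    (2 : ℝ≥0∞) ^ ((j : ℝ) * s) * eLpNorm (Dproj χ j fun x => ((v i x : ℝ) : ℂ)) ⊤ volume

/-- The homogeneous Besov norm `Ḃ^s_{2,2}` of a 3×3-matrix field, as the `ℓ²`
combination of the componentwise Besov norms. -/
def matBesov22 (χ : E3 → ℝ) (s : ℝ) (m : Fin 3 → Fin 3 → E3 → ℝ) : ℝ≥0∞ :=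
  (∑ i : Fin 3, ∑ j : Fin 3,
      besovNorm χ s 2 2 (fun x => ((m i j x : ℝ) : ℂ)) ^ (2 : ℝ)) ^ (1 / 2 : ℝ)

/-- The `L²` norm of `Λ^α v`, where `Λ^α f = 𝓕⁻¹(|ξ|^α 𝓕 f)` acts componentwise on the
real vector field `v`, taken as the `ℓ²` combination of the componentwise norms. -/
def vecFracLapL2 (α : ℝ) (v : Fin 3 → E3 → ℝ) : ℝ≥0∞ :=
  (∑ i : Fin 3,
      eLpNorm (𝓕⁻ fun ξ => ((‖ξ‖ ^ α : ℝ) : ℂ) * 𝓕 (fun x => ((v i x : ℝ) : ℂ)) ξ) 2 volume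
        ^ (2 : ℝ)) ^ (1 / 2 : ℝ)

/-- The vortex-stretching integral `∫ ((ω·∇)u)·ω dx` of a Schwartz vector field `u`
with vorticity `ω = curl u`. -/
def vortexStretch (u : Fin 3 → 𝓢(E3, ℝ)) : ℝ :=
  ∫ x, ∑ j : Fin 3, (∑ i : Fin 3, curlS u i x * pd i (⇑(u j)) x) * curlS u j x

/-!
Tested against a Schwartz function `h`, the part of `f` of frequency below `r` is controlled by
`‖f‖_{Ḃ^{-α}_{∞,∞}} r^α ‖h‖_{L¹}`. Above `r` each block of `f` is the divergence of a field that is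
smaller by the factor `2^{-j}`, so that integration by parts gives
`‖f‖_{Ḃ^{-α}_{∞,∞}} r^{α-1} ‖∇h‖_{L¹}`. For `f = ∂ᵢ uᵏ` and `h = ωⁱ ωᵏ` the Biot–Savart law is a
multiplier of order `0`, which bounds the blocks of `∇u` by those of `ω`, while the `L¹` norms are
bounded by `‖ω‖_{L²}²` and `‖ω‖_{L²} ‖∇ω‖_{L²}`. With `r = ‖ω‖_{Ḃ^{-α}_{∞,∞}}^{1/(2-α)}`, Young's
inequality yields the estimate, in fact without the term in `Ḃ^{-1-α}_{∞,∞}`.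
-/

open SchwartzMap
open scoped LineDeriv Topology

section FourierMultiplier

variable {V F : Type*} [NormedAddCommGroup V] [InnerProductSpace ℝ V] [FiniteDimensional ℝ V]
  [MeasurableSpace V] [BorelSpace V] [NormedAddCommGroup F] [NormedSpace ℂ F]

theorem integral_norm_fourierInv_comp_smul (m : V → F) {r : ℝ} (hr : r ≠ 0) :
    ∫ x, ‖𝓕⁻ (fun ξ ↦ m (r • ξ)) x‖ = ∫ x, ‖𝓕⁻ m x‖ := by
  set d := Module.finrank ℝ V
  have fourierInv_comp_smul (x : V) :
      𝓕⁻ (fun ξ ↦ m (r • ξ)) x = |(r ^ d)⁻¹| • 𝓕⁻ m (r⁻¹ • x) := by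
    simp only [Real.fourierInv_eq']
    rw [← Measure.integral_comp_smul volume
      (fun ξ ↦ Complex.exp (↑(2 * π * inner ℝ ξ (r⁻¹ • x)) * I) • m ξ)]
    simp only [inner_smul_left, inner_smul_right, conj_trivial, inv_mul_cancel_left₀ hr]
  simp only [fourierInv_comp_smul, norm_smul, Real.norm_eq_abs, abs_abs]
  rw [integral_const_mul, Measure.integral_comp_smul volume (fun x ↦ ‖𝓕⁻ m x‖), smul_eq_mul,
    ← mul_assoc, ← abs_mul, inv_pow, inv_inv, inv_mul_cancel₀ (pow_ne_zero _ hr), abs_one, one_mul]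

theorem schwartzMap_integrable_mul (f g : 𝓢(V, ℂ)) : Integrable fun x ↦ f x * g x :=
  (pairing (ContinuousLinearMap.mul ℂ ℂ) f g).integrable

theorem schwartzMap_fourier_sub (f g : 𝓢(V, F)) : 𝓕 (f - g) = 𝓕 f - 𝓕 g :=
  map_sub (FourierTransform.fourierCLM ℂ 𝓢(V, F)) f g

variable [CompleteSpace F]

theorem fourier_fourierMultiplierCLM_apply {m : V → ℂ} (hm : m.HasTemperateGrowth)
    (f : 𝓢(V, F)) (ξ : V) : 𝓕 (fourierMultiplierCLM F m f) ξ = m ξ • 𝓕 f ξ := by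
  rw [fourierMultiplierCLM_apply, FourierTransform.fourier_fourierInv_eq,
    smulLeftCLM_apply_apply hm]

theorem schwartzMap_eq_of_fourier_eq {f g : 𝓢(V, F)} (h : ∀ ξ, 𝓕 f ξ = 𝓕 g ξ) : f = g :=
  (FourierTransform.fourierCLE ℂ 𝓢(V, F)).injective (SchwartzMap.ext h)

theorem fourierMultiplierCLM_eq_convolution (m : 𝓢(V, ℂ)) (f : 𝓢(V, F)) :
    fourierMultiplierCLM F m f = convolution (ContinuousLinearMap.lsmul ℂ ℂ) (𝓕⁻ m) f := by
  refine schwartzMap_eq_of_fourier_eq fun ξ ↦ ?_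
  rw [fourier_fourierMultiplierCLM_apply m.hasTemperateGrowth, fourier_convolution,
    FourierTransform.fourier_fourierInv_eq, pairing_apply_apply, ContinuousLinearMap.lsmul_apply]

theorem norm_fourierMultiplierCLM_apply_le (m : 𝓢(V, ℂ)) (f : 𝓢(V, F)) {b : ℝ}
    (hf : ∀ x, ‖f x‖ ≤ b) (x : V) :
    ‖fourierMultiplierCLM F m f x‖ ≤ (∫ t, ‖𝓕⁻ (⇑m) t‖) * b := by
  rw [fourierMultiplierCLM_eq_convolution, convolution_apply, MeasureTheory.convolution_def,
    ← integral_mul_const, ← fourierInv_coe]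
  refine norm_integral_le_of_norm_le ((𝓕⁻ m).integrable.norm.mul_const b) (.of_forall fun t ↦ ?_)
  rw [ContinuousLinearMap.lsmul_apply, norm_smul]
  gcongr
  exact hf _

theorem norm_fourierMultiplierCLM_comp_smul_apply_le (m : 𝓢(V, ℂ)) {r : ℝ} (hr : r ≠ 0)
    (f : 𝓢(V, F)) {b : ℝ} (hf : ∀ x, ‖f x‖ ≤ b) (x : V) :
    ‖fourierMultiplierCLM F (fun ξ ↦ m (r • ξ)) f x‖ ≤ (∫ t, ‖𝓕⁻ (⇑m) t‖) * b := by
  rw [← integral_norm_fourierInv_comp_smul m hr]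
  exact norm_fourierMultiplierCLM_apply_le
    (compCLMOfContinuousLinearEquiv ℂ (ContinuousLinearEquiv.smulLeft (Units.mk0 r hr)) m) f hf x

end FourierMultiplier

section LittlewoodPaley

variable {n : ℕ} {χ : EuclideanSpace ℝ (Fin n) → ℝ}

/-- The low-frequency projection `S_j`, as an operator on Schwartz functions. It is the zero
operator unless its symbol has temperate growth, as it does for an `IsLPCutoff`. -/
def lpLow (χ : EuclideanSpace ℝ (Fin n) → ℝ) (j : ℤ) :
    𝓢(EuclideanSpace ℝ (Fin n), ℂ) →L[ℂ] 𝓢(EuclideanSpace ℝ (Fin n), ℂ) :=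
  fourierMultiplierCLM ℂ fun ξ ↦ (χ ((2 : ℝ) ^ (-j) • ξ) : ℂ)

/-- The Littlewood–Paley block `Δ_j = S_{j+1} - S_j`, as an operator on Schwartz functions. -/
def lpBlock (χ : EuclideanSpace ℝ (Fin n) → ℝ) (j : ℤ) :
    𝓢(EuclideanSpace ℝ (Fin n), ℂ) →L[ℂ] 𝓢(EuclideanSpace ℝ (Fin n), ℂ) :=
  lpLow χ (j + 1) - lpLow χ j

theorem lpBlock_apply (j : ℤ) (f : 𝓢(EuclideanSpace ℝ (Fin n), ℂ)) :
    lpBlock χ j f = lpLow χ (j + 1) f - lpLow χ j f := rfl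

namespace IsLPCutoff

theorem contDiff (hχ : IsLPCutoff χ) : ContDiff ℝ ((⊤ : ℕ∞) : WithTop ℕ∞) χ := hχ.1

theorem hasCompactSupport (hχ : IsLPCutoff χ) : HasCompactSupport χ := hχ.2.1

theorem nonneg (hχ : IsLPCutoff χ) (ξ : EuclideanSpace ℝ (Fin n)) : 0 ≤ χ ξ :=
  hχ.2.2.2.1 ξ

theorem le_one (hχ : IsLPCutoff χ) (ξ : EuclideanSpace ℝ (Fin n)) : χ ξ ≤ 1 :=
  hχ.2.2.2.2.1 ξ

theorem eq_one_of_norm_le (hχ : IsLPCutoff χ) {ξ : EuclideanSpace ℝ (Fin n)}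
    (hξ : ‖ξ‖ ≤ 3 / 4) : χ ξ = 1 :=
  hχ.2.2.2.2.2.1 ξ hξ

theorem eq_zero_of_lt_norm (hχ : IsLPCutoff χ) {ξ : EuclideanSpace ℝ (Fin n)}
    (hξ : 4 / 3 < ‖ξ‖) : χ ξ = 0 :=
  hχ.2.2.2.2.2.2 ξ hξ

theorem fourier_lpLow_apply (hχ : IsLPCutoff χ) (j : ℤ) (f : 𝓢(EuclideanSpace ℝ (Fin n), ℂ))
    (ξ : EuclideanSpace ℝ (Fin n)) :
    𝓕 (lpLow χ j f) ξ = χ ((2 : ℝ) ^ (-j) • ξ) * 𝓕 f ξ :=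
  fourier_fourierMultiplierCLM_apply
    (Complex.hasTemperateGrowth_ofReal.comp <|
      (hχ.hasCompactSupport.hasTemperateGrowth hχ.contDiff).comp
        ((2 : ℝ) ^ (-j) • ContinuousLinearMap.id ℝ _).hasTemperateGrowth) f ξ

theorem fourier_lpBlock_apply (hχ : IsLPCutoff χ) (j : ℤ) (f : 𝓢(EuclideanSpace ℝ (Fin n), ℂ))
    (ξ : EuclideanSpace ℝ (Fin n)) :
    𝓕 (lpBlock χ j f) ξ =
      ((χ ((2 : ℝ) ^ (-(j + 1)) • ξ) - χ ((2 : ℝ) ^ (-j) • ξ) : ℝ) : ℂ) * 𝓕 f ξ := by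
  rw [lpBlock_apply, schwartzMap_fourier_sub, sub_apply, hχ.fourier_lpLow_apply,
    hχ.fourier_lpLow_apply, ← sub_mul, Complex.ofReal_sub]

theorem coe_lpBlock (hχ : IsLPCutoff χ) (j : ℤ) (f : 𝓢(EuclideanSpace ℝ (Fin n), ℂ)) :
    ⇑(lpBlock χ j f) = Dproj χ j f := by
  rw [← FourierTransform.fourierInv_fourier_eq (F := 𝓢(EuclideanSpace ℝ (Fin n), ℂ))
    (lpBlock χ j f), fourierInv_coe, Dproj]
  congr 1
  ext ξ
  rw [hχ.fourier_lpBlock_apply, fourier_coe]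

theorem tendsto_dilate_atTop (hχ : IsLPCutoff χ) (ξ : EuclideanSpace ℝ (Fin n)) :
    Tendsto (fun j : ℤ ↦ χ ((2 : ℝ) ^ (-j) • ξ)) atTop (𝓝 1) := by
  have two_zpow_neg : Tendsto (fun j : ℤ ↦ (2 : ℝ) ^ (-j)) atTop (𝓝 0) := by
    simpa only [Function.comp_def, Real.rpow_intCast] using
      (tendsto_rpow_atBot_of_base_gt_one 2 one_lt_two).comp
        (tendsto_intCast_atBot_iff.2 tendsto_neg_atTop_atBot)
  have := (hχ.contDiff.continuous.tendsto _).comp (two_zpow_neg.smul_const ξ)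
  rwa [zero_smul, hχ.eq_one_of_norm_le (by norm_num)] at this

theorem tendsto_dilate_atBot (hχ : IsLPCutoff χ) {ξ : EuclideanSpace ℝ (Fin n)} (hξ : ξ ≠ 0) :
    Tendsto (fun j : ℤ ↦ χ ((2 : ℝ) ^ (-j) • ξ)) atBot (𝓝 0) := by
  have two_zpow_neg : Tendsto (fun j : ℤ ↦ (2 : ℝ) ^ (-j)) atBot atTop := by
    simpa only [Function.comp_def, Real.rpow_intCast] using
      (tendsto_rpow_atTop_of_base_gt_one 2 one_lt_two).comp
        (tendsto_intCast_atTop_atTop.comp tendsto_neg_atBot_atTop)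
  refine tendsto_const_nhds.congr' ?_
  filter_upwards [(two_zpow_neg.atTop_mul_const (norm_pos_iff.2 hξ)).eventually_gt_atTop (4 / 3)]
    with j hj
  exact (hχ.eq_zero_of_lt_norm (by rwa [norm_smul, Real.norm_of_nonneg (by positivity)])).symm

theorem integral_lpLow_mul (hχ : IsLPCutoff χ) (j : ℤ) (f h : 𝓢(EuclideanSpace ℝ (Fin n), ℂ)) :
    ∫ x, lpLow χ j f x * h x =
      ∫ ξ, χ ((2 : ℝ) ^ (-j) • ξ) * (𝓕 f ξ * 𝓕⁻ h ξ) := by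
  have parseval := integral_fourierInv_mul_eq (𝓕 (lpLow χ j f)) h
  rw [FourierTransform.fourierInv_fourier_eq] at parseval
  simpa only [hχ.fourier_lpLow_apply, mul_assoc] using parseval

theorem tendsto_integral_lpLow_mul (hχ : IsLPCutoff χ) (f h : 𝓢(EuclideanSpace ℝ (Fin n), ℂ))
    {l : Filter ℤ} [l.IsCountablyGenerated] {c : ℝ}
    (hc : ∀ᵐ ξ, Tendsto (fun j ↦ χ ((2 : ℝ) ^ (-j) • ξ)) l (𝓝 c)) :
    Tendsto (fun j ↦ ∫ x, lpLow χ j f x * h x) l (𝓝 (c * ∫ x, f x * h x)) := by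
  have parseval := integral_fourierInv_mul_eq (𝓕 f) h
  rw [FourierTransform.fourierInv_fourier_eq] at parseval
  rw [parseval, ← integral_const_mul]
  simp only [hχ.integral_lpLow_mul]
  have integrable_mul : Integrable fun ξ ↦ 𝓕 f ξ * 𝓕⁻ h ξ := schwartzMap_integrable_mul _ _
  refine tendsto_integral_filter_of_dominated_convergence _ (.of_forall fun j ↦ ?_)
    (.of_forall fun j ↦ .of_forall fun ξ ↦ ?_) integrable_mul.norm ?_
  · exact (Complex.continuous_ofReal.comp
      (hχ.contDiff.continuous.comp (continuous_const_smul _))).aestronglyMeasurable.mul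
      integrable_mul.aestronglyMeasurable
  · rw [norm_mul, Complex.norm_real, Real.norm_of_nonneg (hχ.nonneg _)]
    exact mul_le_of_le_one_left (norm_nonneg _) (hχ.le_one _)
  · filter_upwards [hc] with ξ hξ
    exact ((Complex.continuous_ofReal.tendsto c).comp hξ).mul_const _

theorem tendsto_integral_lpLow_mul_atTop (hχ : IsLPCutoff χ)
    (f h : 𝓢(EuclideanSpace ℝ (Fin n), ℂ)) :
    Tendsto (fun j ↦ ∫ x, lpLow χ j f x * h x) atTop (𝓝 (∫ x, f x * h x)) := by
  simpa using hχ.tendsto_integral_lpLow_mul f h (.of_forall hχ.tendsto_dilate_atTop)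

theorem tendsto_integral_lpLow_mul_atBot [NeZero n] (hχ : IsLPCutoff χ)
    (f h : 𝓢(EuclideanSpace ℝ (Fin n), ℂ)) :
    Tendsto (fun j ↦ ∫ x, lpLow χ j f x * h x) atBot (𝓝 0) := by
  simpa using hχ.tendsto_integral_lpLow_mul f h (l := atBot) (c := 0)
    ((Measure.ae_ne volume 0).mono fun ξ hξ ↦ hχ.tendsto_dilate_atBot hξ)

end IsLPCutoff

end LittlewoodPaley

section Bernstein

open scoped ContDiff

variable {n : ℕ} {χ : EuclideanSpace ℝ (Fin n) → ℝ}

/-- A cutoff to an annulus that equals one on the support of `φ̂`, so that a Fourier multiplier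
acting on the block `Δ_0` may be cut off to a compactly supported one. -/
def annulusCutoff (χ : EuclideanSpace ℝ (Fin n) → ℝ) (ξ : EuclideanSpace ℝ (Fin n)) : ℝ :=
  χ ((1 / 4 : ℝ) • ξ) - χ ((2 : ℝ) • ξ)

theorem fourier_lineDerivOp_single_apply (i : Fin n) (f : 𝓢(EuclideanSpace ℝ (Fin n), ℂ))
    (ξ : EuclideanSpace ℝ (Fin n)) :
    𝓕 (∂_{EuclideanSpace.single i (1 : ℝ)} f) ξ = 2 * π * I * ξ i * 𝓕 f ξ := by
  rw [fourier_lineDerivOp_eq, smul_apply,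
    smulLeftCLM_apply_apply (hasTemperateGrowth_inner_left _), EuclideanSpace.inner_single_right]
  simp only [one_mul, conj_trivial, Complex.real_smul, smul_eq_mul]
  ring

theorem contDiff_ofReal_coord (i : Fin n) :
    ContDiff ℝ ∞ fun ξ : EuclideanSpace ℝ (Fin n) ↦ (ξ i : ℂ) :=
  Complex.ofRealCLM.contDiff.comp (EuclideanSpace.proj (𝕜 := ℝ) i).contDiff

theorem contDiffAt_inv_ofReal_norm_sq {ξ : EuclideanSpace ℝ (Fin n)} (hξ : ξ ≠ 0) :
    ContDiffAt ℝ ∞ (fun η : EuclideanSpace ℝ (Fin n) ↦ ((‖η‖ : ℂ) ^ 2)⁻¹) ξ := by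
  simp only [← Complex.ofReal_pow]
  exact (Complex.ofRealCLM.contDiff.comp (contDiff_norm_sq ℝ)).contDiffAt.inv (by simpa using hξ)

namespace IsLPCutoff

theorem annulusCutoff_eq_zero_of_norm_le (hχ : IsLPCutoff χ) {ξ : EuclideanSpace ℝ (Fin n)}
    (hξ : ‖ξ‖ ≤ 3 / 8) : annulusCutoff χ ξ = 0 := by
  rw [annulusCutoff, hχ.eq_one_of_norm_le, hχ.eq_one_of_norm_le, sub_self] <;>
    rw [norm_smul, Real.norm_of_nonneg (by simp)] <;> linarith [norm_nonneg ξ]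

theorem annulusCutoff_eq_zero_of_le_norm (hχ : IsLPCutoff χ) {ξ : EuclideanSpace ℝ (Fin n)}
    (hξ : 6 ≤ ‖ξ‖) : annulusCutoff χ ξ = 0 := by
  rw [annulusCutoff, hχ.eq_zero_of_lt_norm, hχ.eq_zero_of_lt_norm, sub_self] <;>
    rw [norm_smul, Real.norm_of_nonneg (by simp)] <;> linarith

theorem annulusCutoff_mul_block (hχ : IsLPCutoff χ) (j : ℤ) (ξ : EuclideanSpace ℝ (Fin n)) :
    annulusCutoff χ ((2 : ℝ) ^ (-j) • ξ) *
        (χ ((2 : ℝ) ^ (-(j + 1)) • ξ) - χ ((2 : ℝ) ^ (-j) • ξ)) =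
      χ ((2 : ℝ) ^ (-(j + 1)) • ξ) - χ ((2 : ℝ) ^ (-j) • ξ) := by
  have half_dilate : (2 : ℝ) ^ (-(j + 1)) • ξ = (1 / 2 : ℝ) • (2 : ℝ) ^ (-j) • ξ := by
    rw [smul_smul, neg_add, zpow_add₀ two_ne_zero, mul_comm]
    norm_num
  rw [half_dilate]
  generalize (2 : ℝ) ^ (-j) • ξ = η
  have norm_dilate {c : ℝ} (hc : 0 ≤ c) : ‖c • η‖ = c * ‖η‖ := by
    rw [norm_smul, Real.norm_of_nonneg hc]
  have norm_two := norm_dilate (c := 2) (by norm_num)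
  have norm_half := norm_dilate (c := 1 / 2) (by norm_num)
  have norm_quarter := norm_dilate (c := 1 / 4) (by norm_num)
  rcases le_or_gt ‖η‖ (3 / 4) with small | not_small
  · rw [hχ.eq_one_of_norm_le (ξ := (1 / 2 : ℝ) • η) (by linarith [norm_nonneg η]),
      hχ.eq_one_of_norm_le small, sub_self, mul_zero]
  rcases le_or_gt ‖η‖ 3 with middle | large
  · rw [annulusCutoff, hχ.eq_one_of_norm_le (ξ := (1 / 4 : ℝ) • η) (by linarith),
      hχ.eq_zero_of_lt_norm (ξ := (2 : ℝ) • η) (by linarith), sub_zero, one_mul]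
  · rw [hχ.eq_zero_of_lt_norm (ξ := (1 / 2 : ℝ) • η) (by linarith),
      hχ.eq_zero_of_lt_norm (ξ := η) (by linarith), sub_self, mul_zero]

theorem annulusCutoff_mul_fourier_lpBlock (hχ : IsLPCutoff χ) (j : ℤ)
    (f : 𝓢(EuclideanSpace ℝ (Fin n), ℂ)) (ξ : EuclideanSpace ℝ (Fin n)) :
    annulusCutoff χ ((2 : ℝ) ^ (-j) • ξ) * 𝓕 (lpBlock χ j f) ξ = 𝓕 (lpBlock χ j f) ξ := by
  rw [hχ.fourier_lpBlock_apply, ← mul_assoc, ← Complex.ofReal_mul, hχ.annulusCutoff_mul_block]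

theorem fourier_lpBlock_apply_zero (hχ : IsLPCutoff χ) (j : ℤ)
    (f : 𝓢(EuclideanSpace ℝ (Fin n), ℂ)) : 𝓕 (lpBlock χ j f) 0 = 0 := by
  simp [hχ.fourier_lpBlock_apply]

theorem exists_schwartzMap_eq_annulusCutoff_mul (hχ : IsLPCutoff χ)
    {p : EuclideanSpace ℝ (Fin n) → ℂ} (hp : ∀ ξ ≠ 0, ContDiffAt ℝ ∞ p ξ) :
    ∃ m : 𝓢(EuclideanSpace ℝ (Fin n), ℂ), ∀ ξ, m ξ = annulusCutoff χ ξ * p ξ := by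
  have compact_support : HasCompactSupport fun ξ ↦ (annulusCutoff χ ξ : ℂ) * p ξ :=
    .intro (isCompact_closedBall 0 6) fun ξ hξ ↦ by
      rw [mem_closedBall_zero_iff, not_le] at hξ
      rw [hχ.annulusCutoff_eq_zero_of_le_norm hξ.le, Complex.ofReal_zero, zero_mul]
  have smooth : ContDiff ℝ ∞ fun ξ ↦ (annulusCutoff χ ξ : ℂ) * p ξ := by
    refine contDiff_iff_contDiffAt.2 fun ξ ↦ ?_
    rcases eq_or_ne ξ 0 with rfl | hξ
    · refine (contDiffAt_const (c := 0)).congr_of_eventuallyEq ?_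
      filter_upwards [Metric.ball_mem_nhds 0 (show (0 : ℝ) < 3 / 8 by norm_num)] with η hη
      rw [mem_ball_zero_iff] at hη
      rw [hχ.annulusCutoff_eq_zero_of_norm_le hη.le, Complex.ofReal_zero, zero_mul]
    · have smooth_cutoff : ContDiff ℝ ∞ (annulusCutoff χ) :=
        (hχ.contDiff.comp (contDiff_const_smul _)).sub (hχ.contDiff.comp (contDiff_const_smul _))
      exact (Complex.ofRealCLM.contDiff.comp smooth_cutoff).contDiffAt.mul (hp ξ hξ)
  exact ⟨compact_support.toSchwartzMap smooth, fun ξ ↦ rfl⟩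

theorem exists_bernstein (hχ : IsLPCutoff χ) {p : EuclideanSpace ℝ (Fin n) → ℂ} {k : ℤ}
    (hp : ∀ ξ ≠ 0, ContDiffAt ℝ ∞ p ξ)
    (hpk : ∀ c : ℝ, 0 < c → ∀ ξ ≠ 0, p (c • ξ) = (c : ℂ) ^ k * p ξ) :
    ∃ K : ℝ, 0 ≤ K ∧ ∀ (j : ℤ) (f : 𝓢(EuclideanSpace ℝ (Fin n), ℂ)),
      ∃ g : 𝓢(EuclideanSpace ℝ (Fin n), ℂ), (∀ ξ, 𝓕 g ξ = p ξ * 𝓕 (lpBlock χ j f) ξ) ∧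
        ∀ b : ℝ, (∀ x, ‖lpBlock χ j f x‖ ≤ b) → ∀ x, ‖g x‖ ≤ K * ((2 : ℝ) ^ (j * k) * b) := by
  obtain ⟨m, hm⟩ := hχ.exists_schwartzMap_eq_annulusCutoff_mul hp
  refine ⟨∫ t, ‖𝓕⁻ (⇑m) t‖, integral_nonneg fun _ ↦ norm_nonneg _, fun j f ↦ ?_⟩
  set r : ℝ := 2 ^ (-j) with hr
  have r_pos : 0 < r := by positivity
  have dilate_growth : (fun ξ ↦ m (r • ξ)).HasTemperateGrowth :=
    m.hasTemperateGrowth.comp (r • ContinuousLinearMap.id ℝ _).hasTemperateGrowth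
  have two_zpow_mul : (((2 : ℝ) ^ (j * k) : ℝ) : ℂ) * (r : ℂ) ^ k = 1 := by
    rw [← Complex.ofReal_zpow, ← Complex.ofReal_mul, hr, ← zpow_mul, ← zpow_add₀ two_ne_zero]
    simp
  refine ⟨(((2 : ℝ) ^ (j * k) : ℝ) : ℂ) •
    fourierMultiplierCLM ℂ (fun ξ ↦ m (r • ξ)) (lpBlock χ j f), fun ξ ↦ ?_, fun b hb x ↦ ?_⟩
  · rw [FourierTransform.fourier_smul, smul_apply, smul_eq_mul,
      fourier_fourierMultiplierCLM_apply dilate_growth, smul_eq_mul, hm]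
    rcases eq_or_ne ξ 0 with rfl | hξ
    · simp only [hχ.fourier_lpBlock_apply_zero, mul_zero]
    · rw [hpk r r_pos ξ hξ]
      linear_combination (annulusCutoff χ (r • ξ) * p ξ * 𝓕 (lpBlock χ j f) ξ) * two_zpow_mul +
        p ξ * hχ.annulusCutoff_mul_fourier_lpBlock j f ξ
  · rw [smul_apply, norm_smul, Complex.norm_real, Real.norm_of_nonneg (by positivity),
      mul_left_comm]
    gcongr
    exact norm_fourierMultiplierCLM_comp_smul_apply_le m r_pos.ne' _ hb x

theorem exists_riesz_bound (hχ : IsLPCutoff χ) (i l : Fin n) :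
    ∃ K : ℝ, 0 ≤ K ∧ ∀ (j : ℤ) (f : 𝓢(EuclideanSpace ℝ (Fin n), ℂ)),
      ∃ g : 𝓢(EuclideanSpace ℝ (Fin n), ℂ),
        (∀ ξ, 𝓕 g ξ = ξ i * ξ l * ((‖ξ‖ : ℂ) ^ 2)⁻¹ * 𝓕 (lpBlock χ j f) ξ) ∧
        ∀ b : ℝ, (∀ x, ‖lpBlock χ j f x‖ ≤ b) → ∀ x, ‖g x‖ ≤ K * b := by
  simpa only [mul_zero, zpow_zero, one_mul] using hχ.exists_bernstein (k := 0)
    (p := fun ξ ↦ ξ i * ξ l * ((‖ξ‖ : ℂ) ^ 2)⁻¹)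
    (fun ξ hξ ↦ ((contDiff_ofReal_coord i).mul (contDiff_ofReal_coord l)).contDiffAt.mul
      (contDiffAt_inv_ofReal_norm_sq hξ))
    (fun c hc ξ hξ ↦ by
      have c_ne : (c : ℂ) ≠ 0 := by exact_mod_cast hc.ne'
      have norm_ne : (‖ξ‖ : ℂ) ≠ 0 := by simpa using hξ
      simp only [norm_smul, Real.norm_of_nonneg hc.le, PiLp.smul_apply, smul_eq_mul,
        Complex.ofReal_mul]
      field_simp)

theorem exists_inverse_gradient_bound (hχ : IsLPCutoff χ) (i : Fin n) :
    ∃ K : ℝ, 0 ≤ K ∧ ∀ (j : ℤ) (f : 𝓢(EuclideanSpace ℝ (Fin n), ℂ)),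
      ∃ g : 𝓢(EuclideanSpace ℝ (Fin n), ℂ),
        (∀ ξ, 𝓕 g ξ = (2 * π * I)⁻¹ * (ξ i * ((‖ξ‖ : ℂ) ^ 2)⁻¹) * 𝓕 (lpBlock χ j f) ξ) ∧
        ∀ b : ℝ, (∀ x, ‖lpBlock χ j f x‖ ≤ b) → ∀ x, ‖g x‖ ≤ K * ((2 : ℝ) ^ (-j) * b) := by
  simpa only [mul_neg_one] using hχ.exists_bernstein (k := -1)
    (p := fun ξ ↦ (2 * π * I)⁻¹ * (ξ i * ((‖ξ‖ : ℂ) ^ 2)⁻¹))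
    (fun ξ hξ ↦ contDiffAt_const.mul
      ((contDiff_ofReal_coord i).contDiffAt.mul (contDiffAt_inv_ofReal_norm_sq hξ)))
    (fun c hc ξ hξ ↦ by
      have c_ne : (c : ℂ) ≠ 0 := by exact_mod_cast hc.ne'
      have norm_ne : (‖ξ‖ : ℂ) ≠ 0 := by simpa using hξ
      simp only [norm_smul, Real.norm_of_nonneg hc.le, PiLp.smul_apply, smul_eq_mul,
        Complex.ofReal_mul, zpow_neg_one]
      field_simp)

theorem exists_antidivergence_bound (hχ : IsLPCutoff χ) :
    ∃ K : ℝ, 0 ≤ K ∧ ∀ (j : ℤ) (f : 𝓢(EuclideanSpace ℝ (Fin n), ℂ)),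
      ∃ G : Fin n → 𝓢(EuclideanSpace ℝ (Fin n), ℂ),
        lpBlock χ j f = ∑ i, ∂_{EuclideanSpace.single i (1 : ℝ)} (G i) ∧
        ∀ b : ℝ, (∀ x, ‖lpBlock χ j f x‖ ≤ b) → ∀ i x, ‖G i x‖ ≤ K * ((2 : ℝ) ^ (-j) * b) := by
  choose K K_nonneg hK using hχ.exists_inverse_gradient_bound
  refine ⟨∑ i, K i, Finset.sum_nonneg fun i _ ↦ K_nonneg i, fun j f ↦ ?_⟩
  choose G hG G_le using fun i ↦ hK i j f
  refine ⟨G, schwartzMap_eq_of_fourier_eq fun ξ ↦ ?_, fun b hb i x ↦ ?_⟩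
  · rw [FourierTransform.fourier_sum, _root_.sum_apply]
    simp only [fourier_lineDerivOp_single_apply, hG]
    rcases eq_or_ne ξ 0 with rfl | hξ
    · simp [hχ.fourier_lpBlock_apply_zero]
    have norm_ne : (‖ξ‖ : ℂ) ≠ 0 := by simpa using hξ
    have norm_sq : (‖ξ‖ : ℂ) ^ 2 = ∑ i, (ξ i : ℂ) ^ 2 := by
      exact_mod_cast EuclideanSpace.real_norm_sq_eq ξ
    calc 𝓕 (lpBlock χ j f) ξ
        = (∑ i, (ξ i : ℂ) ^ 2) / (‖ξ‖ : ℂ) ^ 2 * 𝓕 (lpBlock χ j f) ξ := by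
          rw [← norm_sq, div_self (pow_ne_zero 2 norm_ne), one_mul]
      _ = _ := by
          rw [Finset.sum_div, Finset.sum_mul]
          refine Finset.sum_congr rfl fun i _ ↦ ?_
          field_simp [Complex.two_pi_I_ne_zero]
  · have b_nonneg : 0 ≤ b := (norm_nonneg _).trans (hb x)
    refine (G_le i b hb x).trans ?_
    gcongr
    exact Finset.single_le_sum (fun i _ ↦ K_nonneg i) (Finset.mem_univ i)

end IsLPCutoff

end Bernstein

section Duality

theorem norm_sub_le_of_tendsto_atTop_of_geometric {E : Type*} [SeminormedAddCommGroup E]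
    {T : ℤ → E} {a : E} (hT : Tendsto T atTop (𝓝 a)) {B s : ℝ} (hs : s < 0)
    (hdiff : ∀ j, ‖T (j + 1) - T j‖ ≤ B * (2 : ℝ) ^ (j * s)) (N : ℤ) :
    ‖T N - a‖ ≤ B * (2 : ℝ) ^ (N * s) * (1 - (2 : ℝ) ^ s)⁻¹ := by
  have shift_tendsto : Tendsto (fun m : ℕ ↦ T (N + m)) atTop (𝓝 a) :=
    hT.comp (tendsto_atTop_add_const_left _ N tendsto_natCast_atTop_atTop)
  have shift_dist (m : ℕ) : dist (T (N + m)) (T (N + (m + 1 : ℕ))) ≤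
      B * (2 : ℝ) ^ (N * s) * ((2 : ℝ) ^ s) ^ m := by
    rw [dist_eq_norm, norm_sub_rev]
    refine (hdiff (N + m)).trans_eq' ?_ |>.trans_eq ?_
    · push_cast
      rw [add_assoc]
    · rw [← Real.rpow_mul_natCast two_pos.le, mul_assoc, ← Real.rpow_add two_pos]
      push_cast
      ring_nf
  simpa [dist_eq_norm, div_eq_mul_inv] using dist_le_of_le_geometric_of_tendsto₀ _ _
    (Real.rpow_lt_one_of_one_lt_of_neg one_lt_two hs) shift_dist shift_tendsto

theorem norm_sub_le_of_tendsto_atBot_of_geometric {E : Type*} [SeminormedAddCommGroup E]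
    {T : ℤ → E} {a : E} (hT : Tendsto T atBot (𝓝 a)) {B s : ℝ} (hs : 0 < s)
    (hdiff : ∀ j, ‖T (j + 1) - T j‖ ≤ B * (2 : ℝ) ^ (j * s)) (N : ℤ) :
    ‖T N - a‖ ≤ B * (2 : ℝ) ^ (N * s) * (1 - (2 : ℝ) ^ (-s))⁻¹ := by
  have B_nonneg : 0 ≤ B := by simpa using (norm_nonneg _).trans (hdiff 0)
  have reflected := norm_sub_le_of_tendsto_atTop_of_geometric
    (T := fun j ↦ T (-j)) (hT.comp tendsto_neg_atTop_atBot) (B := B) (neg_lt_zero.2 hs)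
    (fun j ↦ ?_) (-N)
  · simpa using reflected
  · have := hdiff (-(j + 1))
    rw [neg_add_rev, neg_add_cancel_comm, norm_sub_rev, ← neg_add_rev] at this
    refine this.trans ?_
    refine mul_le_mul_of_nonneg_left
      (Real.rpow_le_rpow_of_exponent_le one_le_two ?_) B_nonneg
    push_cast
    linarith

theorem exists_dyadic_scale {α r : ℝ} (hα : 0 ≤ α) (hα1 : α ≤ 1) (hr : 0 < r) :
    ∃ N : ℤ, (2 : ℝ) ^ (N * α) ≤ r ^ α ∧ (2 : ℝ) ^ (N * (α - 1)) ≤ 2 * r ^ (α - 1) := by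
  obtain ⟨N, zpow_le, lt_zpow_succ⟩ := exists_mem_Ico_zpow hr one_lt_two
  rw [zpow_add_one₀ two_ne_zero, ← div_lt_iff₀ two_pos] at lt_zpow_succ
  refine ⟨N, ?_, ?_⟩ <;> rw [Real.rpow_mul two_pos.le, Real.rpow_intCast]
  · gcongr
  · calc ((2 : ℝ) ^ N) ^ (α - 1)
        ≤ (r / 2) ^ (α - 1) :=
          Real.rpow_le_rpow_of_nonpos (by positivity) lt_zpow_succ.le (by linarith)
      _ = (2 : ℝ) ^ (1 - α) * r ^ (α - 1) := by
          rw [Real.div_rpow hr.le two_pos.le, div_eq_mul_inv, ← Real.rpow_neg two_pos.le, neg_sub,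
            mul_comm]
      _ ≤ (2 : ℝ) ^ (1 : ℝ) * r ^ (α - 1) := by
          gcongr
          · exact one_le_two
          · linarith
      _ = 2 * r ^ (α - 1) := by rw [Real.rpow_one]

section Pairing

variable {V : Type*} [NormedAddCommGroup V] [InnerProductSpace ℝ V] [FiniteDimensional ℝ V]
  [MeasurableSpace V] [BorelSpace V]

theorem norm_integral_mul_le_of_norm_le (f h : 𝓢(V, ℂ)) {b : ℝ} (hf : ∀ x, ‖f x‖ ≤ b) :
    ‖∫ x, f x * h x‖ ≤ b * ∫ x, ‖h x‖ := by
  rw [← integral_const_mul]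
  refine norm_integral_le_of_norm_le (h.integrable.norm.const_mul b) (.of_forall fun x ↦ ?_)
  rw [norm_mul]
  gcongr
  exact hf x

theorem norm_integral_sum_lineDerivOp_mul_le {ι : Type*} [Fintype ι] (e : ι → V)
    (G : ι → 𝓢(V, ℂ)) (h : 𝓢(V, ℂ)) {b : ℝ} (hG : ∀ i x, ‖G i x‖ ≤ b) :
    ‖∫ x, (∑ i, ∂_{e i} (G i)) x * h x‖ ≤ b * ∑ i, ∫ x, ‖(∂_{e i} h) x‖ := by
  have by_parts : ∫ x, (∑ i, ∂_{e i} (G i)) x * h x = ∑ i, -∫ x, G i x * (∂_{e i} h) x := by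
    simp only [_root_.sum_apply, Finset.sum_mul, integral_mul_lineDerivOp_right_eq_neg_left,
      neg_neg]
    exact integral_finsetSum _ fun i _ ↦ schwartzMap_integrable_mul _ _
  rw [by_parts, Finset.mul_sum]
  refine norm_sum_le_of_le _ fun i _ ↦ ?_
  rw [norm_neg]
  exact norm_integral_mul_le_of_norm_le _ _ (hG i)

end Pairing

variable {n : ℕ} {χ : EuclideanSpace ℝ (Fin n) → ℝ}

/-- The `L¹` norm of the gradient, as the sum of the `L¹` norms of the partial derivatives. -/
def gradL1 (h : 𝓢(EuclideanSpace ℝ (Fin n), ℂ)) : ℝ :=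
  ∑ i : Fin n, ∫ x, ‖(∂_{EuclideanSpace.single i (1 : ℝ)} h : 𝓢(EuclideanSpace ℝ (Fin n), ℂ)) x‖

theorem gradL1_nonneg (h : 𝓢(EuclideanSpace ℝ (Fin n), ℂ)) : 0 ≤ gradL1 h :=
  Finset.sum_nonneg fun _ _ ↦ integral_nonneg fun _ ↦ norm_nonneg _

theorem integral_lpLow_succ_mul_sub (j : ℤ) (f h : 𝓢(EuclideanSpace ℝ (Fin n), ℂ)) :
    (∫ x, lpLow χ (j + 1) f x * h x) - ∫ x, lpLow χ j f x * h x =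
      ∫ x, lpBlock χ j f x * h x := by
  rw [← integral_sub (schwartzMap_integrable_mul _ _) (schwartzMap_integrable_mul _ _)]
  simp only [lpBlock_apply, sub_apply, sub_mul]

namespace IsLPCutoff

theorem norm_integral_lpLow_mul_le [NeZero n] (hχ : IsLPCutoff χ) {α : ℝ} (hα : 0 < α)
    {f h : 𝓢(EuclideanSpace ℝ (Fin n), ℂ)} {A : ℝ}
    (hf : ∀ (j : ℤ) x, ‖lpBlock χ j f x‖ ≤ A * (2 : ℝ) ^ (j * α)) (N : ℤ) :
    ‖∫ x, lpLow χ N f x * h x‖ ≤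
      A * (∫ x, ‖h x‖) * (2 : ℝ) ^ (N * α) * (1 - (2 : ℝ) ^ (-α))⁻¹ := by
  rw [← sub_zero (∫ x, lpLow χ N f x * h x)]
  refine norm_sub_le_of_tendsto_atBot_of_geometric (hχ.tendsto_integral_lpLow_mul_atBot f h) hα
    (fun j ↦ ?_) N
  rw [integral_lpLow_succ_mul_sub, mul_right_comm]
  exact norm_integral_mul_le_of_norm_le _ _ (hf j)

theorem exists_norm_integral_lpLow_mul_sub_le (hχ : IsLPCutoff χ) {α : ℝ} (hα : α < 1) :
    ∃ K : ℝ, 0 ≤ K ∧ ∀ (f h : 𝓢(EuclideanSpace ℝ (Fin n), ℂ)) (A : ℝ),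
      (∀ (j : ℤ) x, ‖lpBlock χ j f x‖ ≤ A * (2 : ℝ) ^ (j * α)) → ∀ N : ℤ,
        ‖(∫ x, lpLow χ N f x * h x) - ∫ x, f x * h x‖ ≤
          K * A * gradL1 h * (2 : ℝ) ^ (N * (α - 1)) := by
  obtain ⟨K, K_nonneg, hK⟩ := hχ.exists_antidivergence_bound
  have geometric_nonneg : 0 ≤ (1 - (2 : ℝ) ^ (α - 1))⁻¹ := inv_nonneg.2 <| sub_nonneg.2 <|
    Real.rpow_le_one_of_one_le_of_nonpos one_le_two (by linarith)
  refine ⟨K * (1 - (2 : ℝ) ^ (α - 1))⁻¹, by positivity, fun f h A hf N ↦ ?_⟩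
  refine (norm_sub_le_of_tendsto_atTop_of_geometric (hχ.tendsto_integral_lpLow_mul_atTop f h)
    (B := K * A * gradL1 h) (sub_neg.2 hα) (fun j ↦ ?_) N).trans_eq (by ring)
  obtain ⟨G, div_G, G_le⟩ := hK j f
  rw [integral_lpLow_succ_mul_sub, div_G]
  refine (norm_integral_sum_lineDerivOp_mul_le _ G h (G_le _ (hf j))).trans_eq ?_
  rw [gradL1, mul_sub_one, Real.rpow_sub two_pos, Real.rpow_intCast, zpow_neg]
  ring

theorem exists_duality_bound [NeZero n] (hχ : IsLPCutoff χ) {α : ℝ} (hα : 0 < α) (hα1 : α < 1) :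
    ∃ C : ℝ, 0 < C ∧ ∀ (f h : 𝓢(EuclideanSpace ℝ (Fin n), ℂ)) (A : ℝ),
      (∀ (j : ℤ) x, ‖lpBlock χ j f x‖ ≤ A * (2 : ℝ) ^ (j * α)) → ∀ r : ℝ, 0 < r →
        ‖∫ x, f x * h x‖ ≤ C * A * (r ^ α * (∫ x, ‖h x‖) + r ^ (α - 1) * gradL1 h) := by
  obtain ⟨K, K_nonneg, hK⟩ := hχ.exists_norm_integral_lpLow_mul_sub_le hα1
  set c := (1 - (2 : ℝ) ^ (-α))⁻¹
  have c_pos : 0 < c := inv_pos.2 <| sub_pos.2 <|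
    Real.rpow_lt_one_of_one_lt_of_neg one_lt_two (by linarith)
  refine ⟨c + K * 2, by positivity, fun f h A hf r hr ↦ ?_⟩
  have A_nonneg : 0 ≤ A := by simpa using (norm_nonneg _).trans (hf 0 0)
  obtain ⟨N, low_factor, high_factor⟩ := exists_dyadic_scale hα.le hα1.le hr
  set H := ∫ x, ‖h x‖
  set D := gradL1 h
  have D_nonneg : 0 ≤ D := gradL1_nonneg h
  calc ‖∫ x, f x * h x‖
      ≤ A * H * (2 : ℝ) ^ (N * α) * c + K * A * D * (2 : ℝ) ^ (N * (α - 1)) :=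
        (norm_le_norm_add_norm_sub' _ _).trans (add_le_add (hχ.norm_integral_lpLow_mul_le hα hf N)
          (norm_sub_rev _ _ |>.trans_le <| hK f h A hf N))
    _ ≤ A * H * r ^ α * c + K * A * D * (2 * r ^ (α - 1)) := by gcongr
    _ = c * A * (r ^ α * H) + K * 2 * A * (r ^ (α - 1) * D) := by ring
    _ ≤ c * A * (r ^ α * H + r ^ (α - 1) * D) + K * 2 * A * (r ^ α * H + r ^ (α - 1) * D) := by
        gcongr
        · exact le_add_of_nonneg_right (by positivity)
        · exact le_add_of_nonneg_left (by positivity)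
    _ = (c + K * 2) * A * (r ^ α * H + r ^ (α - 1) * D) := by ring

end IsLPCutoff

end Duality

section Energy

section Pointwise

variable {V : Type*} [NormedAddCommGroup V] [NormedSpace ℝ V]

/-- The inclusion of the real-valued Schwartz functions into the complex-valued ones, to which the
Fourier transform applies. -/
def complexify : 𝓢(V, ℝ) →L[ℝ] 𝓢(V, ℂ) :=
  postcompCLM Complex.ofRealCLM

theorem complexify_apply (f : 𝓢(V, ℝ)) (x : V) : complexify f x = (f x : ℂ) := rfl

theorem complexify_lineDerivOp (m : V) (f : 𝓢(V, ℝ)) :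
    complexify (∂_{m} f) = ∂_{m} (complexify f) := by
  ext x
  have hasFDerivAt_complexify :
      HasFDerivAt (complexify f) (Complex.ofRealCLM.comp (fderiv ℝ f x)) x :=
    Complex.ofRealCLM.hasFDerivAt.comp x (f.hasFDerivAt x)
  rw [lineDerivOp_apply_eq_fderiv, hasFDerivAt_complexify.fderiv]
  rfl

/-- The pointwise product of two real-valued Schwartz functions, as a Schwartz function. -/
def schwartzMul (f g : 𝓢(V, ℝ)) : 𝓢(V, ℝ) :=
  pairing (ContinuousLinearMap.mul ℝ ℝ) f g

theorem schwartzMul_apply (f g : 𝓢(V, ℝ)) (x : V) : schwartzMul f g x = f x * g x := rfl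

theorem lineDerivOp_schwartzMul_apply (m : V) (f g : 𝓢(V, ℝ)) (x : V) :
    (∂_{m} (schwartzMul f g)) x = f x * (∂_{m} g) x + (∂_{m} f) x * g x := by
  have hasFDerivAt_schwartzMul :
      HasFDerivAt (schwartzMul f g) (f x • fderiv ℝ g x + g x • fderiv ℝ f x) x :=
    (f.hasFDerivAt x).mul (g.hasFDerivAt x)
  simp only [lineDerivOp_apply_eq_fderiv, hasFDerivAt_schwartzMul.fderiv, add_apply, smul_apply,
    smul_eq_mul, mul_comm]

end Pointwise

theorem abs_mul_le_mul_sq_add_inv_mul_sq {δ : ℝ} (hδ : 0 < δ) (a b : ℝ) :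
    |a * b| ≤ δ * a ^ 2 + δ⁻¹ * b ^ 2 := by
  have square_nonneg : 0 ≤ δ * (|a| - δ⁻¹ * |b|) ^ 2 := by positivity
  have expand : δ * (|a| - δ⁻¹ * |b|) ^ 2 = δ * a ^ 2 - 2 * |a * b| + δ⁻¹ * b ^ 2 := by
    rw [sub_sq, mul_pow, sq_abs, sq_abs, abs_mul]
    field_simp
  linarith [abs_nonneg (a * b)]

section Integral

variable {V : Type*} [NormedAddCommGroup V] [InnerProductSpace ℝ V] [FiniteDimensional ℝ V]
  [MeasurableSpace V] [BorelSpace V]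

theorem schwartzMap_integrable_sq (f : 𝓢(V, ℝ)) : Integrable fun x ↦ f x ^ 2 := by
  simp only [sq]
  exact (schwartzMul f f).integrable

theorem integral_abs_mul_le (f g : 𝓢(V, ℝ)) {δ : ℝ} (hδ : 0 < δ) :
    ∫ x, |f x * g x| ≤ δ * (∫ x, f x ^ 2) + δ⁻¹ * ∫ x, g x ^ 2 := by
  have integrable_f := (schwartzMap_integrable_sq f).const_mul δ
  have integrable_g := (schwartzMap_integrable_sq g).const_mul δ⁻¹
  rw [← integral_const_mul, ← integral_const_mul, ← integral_add integrable_f integrable_g]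
  exact integral_mono (schwartzMul f g).integrable.abs (integrable_f.add integrable_g)
    fun x ↦ abs_mul_le_mul_sq_add_inv_mul_sq hδ (f x) (g x)

theorem eLpNorm_two_rpow_two (f : 𝓢(V, ℝ)) :
    eLpNorm f 2 volume ^ (2 : ℝ) = ENNReal.ofReal (∫ x, f x ^ 2) := by
  rw [eLpNorm_eq_lintegral_rpow_enorm_toReal two_ne_zero ENNReal.ofNat_ne_top, ← ENNReal.rpow_mul,
    ofReal_integral_eq_lintegral_ofReal (schwartzMap_integrable_sq f)
      (ae_of_all _ fun x ↦ sq_nonneg _)]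
  norm_num
  refine lintegral_congr fun x ↦ ?_
  rw [Real.enorm_eq_ofReal_abs, ← ENNReal.ofReal_pow (abs_nonneg _), sq_abs]

theorem norm_le_of_eLpNorm_top_le (f : 𝓢(V, ℂ)) {c : ℝ} (hc : 0 ≤ c)
    (h : eLpNorm f ⊤ volume ≤ ENNReal.ofReal c) (x : V) : ‖f x‖ ≤ c := by
  have ae_le : ∀ᵐ y, ‖f y‖ ≤ c := by
    rw [eLpNorm_exponent_top] at h
    filter_upwards [enorm_ae_le_eLpNormEssSup f volume] with y hy
    rw [← ENNReal.ofReal_le_ofReal_iff hc, ofReal_norm]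
    exact hy.trans h
  exact (isClosed_le f.continuous.norm continuous_const).closure_subset
    (Measure.dense_of_ae ae_le x)

end Integral

variable {ι : Type*} [Fintype ι] {n : ℕ}

/-- The squared `L²` norm of a Schwartz vector field. -/
def l2NormSq (v : ι → 𝓢(EuclideanSpace ℝ (Fin n), ℝ)) : ℝ :=
  ∑ i, ∫ x, v i x ^ 2

/-- The squared `L²` norm of the gradient of a Schwartz vector field. -/
def gradL2NormSq (v : ι → 𝓢(EuclideanSpace ℝ (Fin n), ℝ)) : ℝ :=
  ∑ l : Fin n, l2NormSq fun i ↦ ∂_{EuclideanSpace.single l (1 : ℝ)} (v i)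

theorem l2NormSq_nonneg (v : ι → 𝓢(EuclideanSpace ℝ (Fin n), ℝ)) : 0 ≤ l2NormSq v :=
  Finset.sum_nonneg fun _ _ ↦ integral_nonneg fun _ ↦ sq_nonneg _

theorem gradL2NormSq_nonneg (v : ι → 𝓢(EuclideanSpace ℝ (Fin n), ℝ)) : 0 ≤ gradL2NormSq v :=
  Finset.sum_nonneg fun _ _ ↦ l2NormSq_nonneg _

theorem eq_zero_of_l2NormSq_eq_zero {v : ι → 𝓢(EuclideanSpace ℝ (Fin n), ℝ)}
    (hv : l2NormSq v = 0) : v = 0 := by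
  ext i x
  have sq_integral_eq_zero : ∫ x, v i x ^ 2 = 0 :=
    (Finset.sum_eq_zero_iff_of_nonneg fun i _ ↦ integral_nonneg fun _ ↦ sq_nonneg _).1 hv i
      (Finset.mem_univ i)
  have sq_ae_eq_zero := (integral_eq_zero_iff_of_nonneg (fun _ ↦ sq_nonneg _)
    (schwartzMap_integrable_sq (v i))).1 sq_integral_eq_zero
  have sq_eq_zero := ((v i).continuous.pow 2).ae_eq_iff_eq volume continuous_zero |>.1 sq_ae_eq_zero
  exact pow_eq_zero_iff two_ne_zero |>.1 (congrFun sq_eq_zero x)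

theorem sum_integral_abs_mul_le {κ : Type*} [Fintype κ] (v : ι → 𝓢(EuclideanSpace ℝ (Fin n), ℝ))
    (w : κ → 𝓢(EuclideanSpace ℝ (Fin n), ℝ)) {δ : ℝ} (hδ : 0 < δ) :
    ∑ i, ∑ k, ∫ x, |v i x * w k x| ≤
      δ * (Fintype.card κ * l2NormSq v) + δ⁻¹ * (Fintype.card ι * l2NormSq w) := by
  calc ∑ i, ∑ k, ∫ x, |v i x * w k x|
      ≤ ∑ i, ∑ k, (δ * (∫ x, v i x ^ 2) + δ⁻¹ * ∫ x, w k x ^ 2) :=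
        Finset.sum_le_sum fun i _ ↦ Finset.sum_le_sum fun k _ ↦ integral_abs_mul_le _ _ hδ
    _ = δ * (Fintype.card κ * l2NormSq v) + δ⁻¹ * (Fintype.card ι * l2NormSq w) := by
        simp only [Finset.sum_add_distrib, ← Finset.mul_sum, Finset.sum_const, Finset.card_univ,
          nsmul_eq_mul, l2NormSq]

theorem sum_integral_norm_complexify_schwartzMul_le
    (v : ι → 𝓢(EuclideanSpace ℝ (Fin n), ℝ)) :
    ∑ i, ∑ k, ∫ x, ‖complexify (schwartzMul (v i) (v k)) x‖ ≤
      2 * Fintype.card ι * l2NormSq v := by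
  simp only [complexify_apply, schwartzMul_apply, Complex.norm_real, Real.norm_eq_abs]
  refine (sum_integral_abs_mul_le v v one_pos).trans_eq ?_
  ring

theorem integral_norm_lineDerivOp_complexify_schwartzMul_le (m : EuclideanSpace ℝ (Fin n))
    (f g : 𝓢(EuclideanSpace ℝ (Fin n), ℝ)) :
    ∫ x, ‖(∂_{m} (complexify (schwartzMul f g)) : 𝓢(EuclideanSpace ℝ (Fin n), ℂ)) x‖ ≤
      (∫ x, |(∂_{m} f : 𝓢(EuclideanSpace ℝ (Fin n), ℝ)) x * g x|) +
        ∫ x, |(∂_{m} g : 𝓢(EuclideanSpace ℝ (Fin n), ℝ)) x * f x| := by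
  have integrable_left := (schwartzMul (∂_{m} f) g).integrable (μ := volume).abs
  have integrable_right := (schwartzMul (∂_{m} g) f).integrable (μ := volume).abs
  refine (integral_mono (SchwartzMap.integrable _).norm (integrable_left.add integrable_right)
    fun x ↦ ?_).trans_eq (integral_add integrable_left integrable_right)
  rw [← complexify_lineDerivOp, complexify_apply, Complex.norm_real, Real.norm_eq_abs,
    lineDerivOp_schwartzMul_apply, add_comm, mul_comm (f x)]
  exact abs_add_le _ _

theorem sum_gradL1_complexify_schwartzMul_le (v : ι → 𝓢(EuclideanSpace ℝ (Fin n), ℝ)) {δ : ℝ}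
    (hδ : 0 < δ) :
    ∑ i, ∑ k, gradL1 (complexify (schwartzMul (v i) (v k))) ≤
      2 * Fintype.card ι * (δ * gradL2NormSq v + δ⁻¹ * (n * l2NormSq v)) := by
  let P (l : Fin n) (i k : ι) : ℝ :=
    ∫ x, |(∂_{EuclideanSpace.single l (1 : ℝ)} (v i) : 𝓢(EuclideanSpace ℝ (Fin n), ℝ)) x * v k x|
  calc ∑ i, ∑ k, gradL1 (complexify (schwartzMul (v i) (v k)))
      ≤ ∑ i, ∑ k, ∑ l, (P l i k + P l k i) :=
        Finset.sum_le_sum fun i _ ↦ Finset.sum_le_sum fun k _ ↦ Finset.sum_le_sum fun l _ ↦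
          integral_norm_lineDerivOp_complexify_schwartzMul_le _ (v i) (v k)
    _ = ∑ l, 2 * ∑ i, ∑ k, P l i k := by
        rw [Finset.sum_comm_cycle]
        refine Finset.sum_congr rfl fun l _ ↦ ?_
        simp only [Finset.sum_add_distrib]
        rw [Finset.sum_comm (f := fun i k ↦ P l k i), two_mul]
    _ ≤ ∑ l, 2 * (δ * (Fintype.card ι * l2NormSq fun i ↦ ∂_{EuclideanSpace.single l (1 : ℝ)} (v i))
          + δ⁻¹ * (Fintype.card ι * l2NormSq v)) := by
        gcongr with l
        exact sum_integral_abs_mul_le (fun i ↦ ∂_{EuclideanSpace.single l (1 : ℝ)} (v i)) v hδ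
    _ = 2 * Fintype.card ι * (δ * gradL2NormSq v + δ⁻¹ * (n * l2NormSq v)) := by
        simp only [gradL2NormSq, ← Finset.mul_sum, Finset.sum_add_distrib, Finset.sum_const,
          Finset.card_univ, Fintype.card_fin, nsmul_eq_mul]
        ring

end Energy

section QuadraticForm

theorem le_of_forall_interpolation_le {α K A V X Y : ℝ} (hα : α < 2) (hK : 0 ≤ K) (hA : 0 ≤ A)
    (hY : 0 ≤ Y)
    (hV : ∀ r > 0, ∀ δ > 0, V ≤ K * A * (r ^ α * X + r ^ (α - 1) * (δ * Y + δ⁻¹ * X))) :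
    V ≤ 1 / 2 * Y + (K + 2 * K ^ 2) * A ^ (2 / (2 - α)) * X := by
  have exponent_pos : 0 < 2 / (2 - α) := div_pos two_pos (by linarith)
  have V_le := hV 1 one_pos 1 one_pos
  rcases hK.eq_or_lt with rfl | K_pos
  · simp only [zero_mul] at V_le
    linarith
  rcases hA.eq_or_lt with rfl | A_pos
  · rw [Real.zero_rpow exponent_pos.ne']
    simp only [mul_zero, zero_mul] at V_le ⊢
    linarith
  -- The scale `t` balances the two frequency regimes: `A * t ^ α = t ^ 2`, `A * t ^ (α - 1) = t`.
  set t := A ^ (1 / (2 - α))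
  have t_pos : 0 < t := by positivity
  have A_eq : A = t ^ (2 - α) := by
    rw [← Real.rpow_mul hA, one_div_mul_cancel (by linarith), Real.rpow_one]
  have low_scale : A * t ^ α = t ^ 2 := by
    rw [A_eq, ← Real.rpow_add t_pos, sub_add_cancel, Real.rpow_two]
  have high_scale : A * t ^ (α - 1) = t := by
    rw [A_eq, ← Real.rpow_add t_pos, sub_add_sub_cancel, ← one_add_one_eq_two, add_sub_cancel_right,
      Real.rpow_one]
  have t_sq : t ^ 2 = A ^ (2 / (2 - α)) := by
    rw [← Real.rpow_two, ← Real.rpow_mul hA, div_mul_eq_mul_div, one_mul]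
  calc V ≤ K * A * (t ^ α * X + t ^ (α - 1) * ((2 * (K * t))⁻¹ * Y + (2 * (K * t))⁻¹⁻¹ * X)) :=
        hV t t_pos _ (by positivity)
    _ = K * (A * t ^ α) * X +
          K * (A * t ^ (α - 1)) * ((2 * (K * t))⁻¹ * Y + 2 * (K * t) * X) := by
        rw [inv_inv]
        ring
    _ = 1 / 2 * Y + (K + 2 * K ^ 2) * A ^ (2 / (2 - α)) * X := by
        rw [low_scale, high_scale, ← t_sq]
        field_simp
        ring

variable {ι : Type*} [Fintype ι] {n : ℕ} [NeZero n] {χ : EuclideanSpace ℝ (Fin n) → ℝ}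

theorem IsLPCutoff.exists_quadratic_form_bound (hχ : IsLPCutoff χ) {α : ℝ} (hα : 0 < α)
    (hα1 : α < 1) :
    ∃ C : ℝ, 0 ≤ C ∧ ∀ (f : ι → ι → 𝓢(EuclideanSpace ℝ (Fin n), ℂ))
      (v : ι → 𝓢(EuclideanSpace ℝ (Fin n), ℝ)) (A : ℝ), 0 ≤ A →
      (∀ i k (j : ℤ) x, ‖lpBlock χ j (f i k) x‖ ≤ A * (2 : ℝ) ^ (j * α)) →
        ‖∑ i, ∑ k, ∫ x, f i k x * complexify (schwartzMul (v i) (v k)) x‖ ≤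
          1 / 2 * gradL2NormSq v + C * A ^ (2 / (2 - α)) * l2NormSq v := by
  obtain ⟨C, C_pos, hC⟩ := hχ.exists_duality_bound hα hα1
  set K := C * (2 * Fintype.card ι * n) with hK
  refine ⟨K + 2 * K ^ 2, by positivity, fun f v A A_nonneg hf ↦ ?_⟩
  refine le_of_forall_interpolation_le (by linarith) (by positivity) A_nonneg
    (gradL2NormSq_nonneg v) fun r r_pos δ δ_pos ↦ ?_
  have one_le_n : (1 : ℝ) ≤ n := by exact_mod_cast NeZero.one_le
  have l2_nonneg := l2NormSq_nonneg v
  have grad_nonneg := gradL2NormSq_nonneg v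
  have l2_le := le_mul_of_one_le_left l2_nonneg one_le_n
  have grad_le := le_mul_of_one_le_left grad_nonneg one_le_n
  calc ‖∑ i, ∑ k, ∫ x, f i k x * complexify (schwartzMul (v i) (v k)) x‖
      ≤ ∑ i, ∑ k, C * A * (r ^ α * (∫ x, ‖complexify (schwartzMul (v i) (v k)) x‖) +
          r ^ (α - 1) * gradL1 (complexify (schwartzMul (v i) (v k)))) :=
        norm_sum_le_of_le _ fun i _ ↦ norm_sum_le_of_le _ fun k _ ↦ hC _ _ A (hf i k) r r_pos
    _ = C * A * (r ^ α * (∑ i, ∑ k, ∫ x, ‖complexify (schwartzMul (v i) (v k)) x‖) +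
          r ^ (α - 1) * ∑ i, ∑ k, gradL1 (complexify (schwartzMul (v i) (v k)))) := by
        simp only [← Finset.mul_sum, Finset.sum_add_distrib]
    _ ≤ C * A * (r ^ α * (2 * Fintype.card ι * (n * l2NormSq v)) +
          r ^ (α - 1) * (2 * Fintype.card ι *
            (δ * (n * gradL2NormSq v) + δ⁻¹ * (n * l2NormSq v)))) := by
        gcongr
        · exact (sum_integral_norm_complexify_schwartzMul_le v).trans (by gcongr)
        · exact (sum_gradL1_complexify_schwartzMul_le v δ_pos).trans (by gcongr)
    _ = K * A * (r ^ α * l2NormSq v +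
          r ^ (α - 1) * (δ * gradL2NormSq v + δ⁻¹ * l2NormSq v)) := by
        rw [hK]
        ring

end QuadraticForm

section BiotSavart

/-- The curl of a Schwartz vector field, with the three indices read modulo `3`. -/
def schwartzCurl {F : Type*} [NormedAddCommGroup F] [NormedSpace ℝ F] (u : Fin 3 → 𝓢(E3, F))
    (k : Fin 3) : 𝓢(E3, F) :=
  ∂_{EuclideanSpace.single (k + 1) (1 : ℝ)} (u (k + 2)) -
    ∂_{EuclideanSpace.single (k + 2) (1 : ℝ)} (u (k + 1))

theorem complexify_schwartzCurl (u : Fin 3 → 𝓢(E3, ℝ)) (k : Fin 3) :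
    complexify (schwartzCurl u k) = schwartzCurl (fun i ↦ complexify (u i)) k := by
  simp only [schwartzCurl, map_sub, complexify_lineDerivOp]

theorem sum_coord_mul_fourier_eq_zero {n : ℕ} {u : Fin n → 𝓢(EuclideanSpace ℝ (Fin n), ℂ)}
    (hu : ∑ i, ∂_{EuclideanSpace.single i (1 : ℝ)} (u i) = 0) (ξ : EuclideanSpace ℝ (Fin n)) :
    ∑ i, (ξ i : ℂ) * 𝓕 (u i) ξ = 0 := by
  have fourier_div : ∑ i, 2 * π * I * ξ i * 𝓕 (u i) ξ = 0 := by
    simpa only [FourierTransform.fourier_sum, _root_.sum_apply, fourier_lineDerivOp_single_apply,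
      FourierTransform.fourier_zero, zero_apply] using
      congrArg (fun g : 𝓢(EuclideanSpace ℝ (Fin n), ℂ) ↦ 𝓕 g ξ) hu
  simp only [mul_assoc (2 * π * I : ℂ), ← Finset.mul_sum] at fourier_div
  exact (mul_eq_zero.1 fourier_div).resolve_left Complex.two_pi_I_ne_zero

theorem norm_sq_mul_fourier_lineDerivOp_biotSavart {u : Fin 3 → 𝓢(E3, ℂ)}
    (hu : ∑ i, ∂_{EuclideanSpace.single i (1 : ℝ)} (u i) = 0) (i k : Fin 3) (ξ : E3) :
    (‖ξ‖ : ℂ) ^ 2 * 𝓕 (∂_{EuclideanSpace.single i (1 : ℝ)} (u k)) ξ =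
      ξ i * (ξ (k + 2) * 𝓕 (schwartzCurl u (k + 1)) ξ -
        ξ (k + 1) * 𝓕 (schwartzCurl u (k + 2)) ξ) := by
  have add_indices : ∀ k : Fin 3,
      k + 1 + 1 = k + 2 ∧ k + 1 + 2 = k ∧ k + 2 + 1 = k ∧ k + 2 + 2 = k + 1 := by decide
  have sum_cyclic (g : Fin 3 → ℂ) : ∑ l, g l = g k + g (k + 1) + g (k + 2) := by
    fin_cases k <;> simp [Fin.sum_univ_three] <;> ring
  have divergence := sum_coord_mul_fourier_eq_zero hu ξ
  have norm_sq : (‖ξ‖ : ℂ) ^ 2 = ∑ l, (ξ l : ℂ) ^ 2 := by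
    exact_mod_cast EuclideanSpace.real_norm_sq_eq ξ
  rw [sum_cyclic] at divergence norm_sq
  simp only [schwartzCurl, schwartzMap_fourier_sub, sub_apply, fourier_lineDerivOp_single_apply,
    add_indices k, norm_sq]
  linear_combination (2 * π * I * ξ i * ξ k : ℂ) * divergence

theorem IsLPCutoff.exists_biotSavart_bound {χ : E3 → ℝ} (hχ : IsLPCutoff χ) :
    ∃ K : ℝ, 0 ≤ K ∧ ∀ u : Fin 3 → 𝓢(E3, ℂ),
      ∑ i : Fin 3, ∂_{EuclideanSpace.single i (1 : ℝ)} (u i) = 0 → ∀ (j : ℤ) (b : ℝ),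
      (∀ k x, ‖lpBlock χ j (schwartzCurl u k) x‖ ≤ b) → ∀ (i k : Fin 3) (x : E3),
        ‖lpBlock χ j (∂_{EuclideanSpace.single i (1 : ℝ)} (u k)) x‖ ≤ K * b := by
  choose K K_nonneg hK using hχ.exists_riesz_bound
  obtain ⟨M, hM⟩ := Finite.exists_le (uncurry K)
  refine ⟨M + M, add_nonneg ?_ ?_, fun u hu j b hb i k x ↦ ?_⟩
  iterate 2 exact (K_nonneg 0 0).trans (hM (0, 0))
  have b_nonneg : 0 ≤ b := (norm_nonneg _).trans (hb 0 0)
  obtain ⟨g₁, fourier_g₁, g₁_le⟩ := hK i (k + 2) j (schwartzCurl u (k + 1))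
  obtain ⟨g₂, fourier_g₂, g₂_le⟩ := hK i (k + 1) j (schwartzCurl u (k + 2))
  have block_eq : lpBlock χ j (∂_{EuclideanSpace.single i (1 : ℝ)} (u k)) = g₁ - g₂ := by
    refine schwartzMap_eq_of_fourier_eq fun ξ ↦ ?_
    rw [schwartzMap_fourier_sub, sub_apply, fourier_g₁, fourier_g₂]
    rcases eq_or_ne ξ 0 with rfl | hξ
    · simp only [hχ.fourier_lpBlock_apply_zero, mul_zero, sub_zero]
    have norm_ne : (‖ξ‖ : ℂ) ≠ 0 := by simpa using hξ
    have biotSavart := norm_sq_mul_fourier_lineDerivOp_biotSavart hu i k ξ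
    simp only [hχ.fourier_lpBlock_apply]
    field_simp
    linear_combination
      ((χ ((2 : ℝ) ^ (-(j + 1)) • ξ) - χ ((2 : ℝ) ^ (-j) • ξ) : ℝ) : ℂ) * biotSavart
  rw [block_eq, add_mul]
  refine (norm_sub_le _ _).trans (add_le_add ?_ ?_)
  · exact (g₁_le b (hb _) x).trans (by gcongr; exact hM (i, k + 2))
  · exact (g₂_le b (hb _) x).trans (by gcongr; exact hM (i, k + 1))

end BiotSavart

section VortexStretching

theorem curlS_eq_schwartzCurl (u : Fin 3 → 𝓢(E3, ℝ)) :
    curlS u = fun k ↦ ⇑(schwartzCurl u k) := by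
  ext k
  fin_cases k <;> rfl

theorem pd_coe (i : Fin 3) (f : 𝓢(E3, ℝ)) :
    pd i f = ⇑(∂_{EuclideanSpace.single i (1 : ℝ)} f : 𝓢(E3, ℝ)) := rfl

theorem sum_lineDerivOp_complexify_eq_zero {u : Fin 3 → 𝓢(E3, ℝ)}
    (hu : ∀ x, ∑ i : Fin 3, pd i (⇑(u i)) x = 0) :
    ∑ i, ∂_{EuclideanSpace.single i (1 : ℝ)} (complexify (u i)) = 0 := by
  have div_eq_zero : ∑ i, ∂_{EuclideanSpace.single i (1 : ℝ)} (u i) = 0 := by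
    ext x
    rw [_root_.sum_apply]
    exact hu x
  simpa only [map_sum, complexify_lineDerivOp, map_zero] using congrArg complexify div_eq_zero

theorem ofReal_vortexStretch_eq_sum (u : Fin 3 → 𝓢(E3, ℝ)) :
    (vortexStretch u : ℂ) = ∑ k, ∑ i,
      ∫ x, (∂_{EuclideanSpace.single i (1 : ℝ)} (complexify (u k)) : 𝓢(E3, ℂ)) x *
        complexify (schwartzMul (schwartzCurl u k) (schwartzCurl u i)) x := by
  rw [vortexStretch, ← integral_complex_ofReal]
  simp only [← integral_finsetSum _ fun _ _ ↦ schwartzMap_integrable_mul _ _]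
  rw [← integral_finsetSum _ fun k _ ↦ integrable_finsetSum _ fun i _ ↦
    schwartzMap_integrable_mul _ _]
  refine integral_congr_ae (.of_forall fun x ↦ ?_)
  simp only [← complexify_lineDerivOp, complexify_apply, schwartzMul_apply, curlS_eq_schwartzCurl,
    pd_coe, Complex.ofReal_sum, Complex.ofReal_mul, Finset.sum_mul]
  exact Finset.sum_congr rfl fun k _ ↦ Finset.sum_congr rfl fun i _ ↦ by ring

theorem vortexStretch_eq_zero {u : Fin 3 → 𝓢(E3, ℝ)} (hu : schwartzCurl u = 0) :
    vortexStretch u = 0 := by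
  simp [vortexStretch, curlS_eq_schwartzCurl, hu]

theorem IsLPCutoff.exists_abs_vortexStretch_le {χ : E3 → ℝ} (hχ : IsLPCutoff χ) {α : ℝ}
    (hα : 0 < α) (hα1 : α < 1) :
    ∃ C : ℝ, 0 ≤ C ∧ ∀ u : Fin 3 → 𝓢(E3, ℝ), (∀ x, ∑ i : Fin 3, pd i (⇑(u i)) x = 0) →
      ∀ b : ℝ, 0 ≤ b →
      (∀ k (j : ℤ) x, ‖lpBlock χ j (complexify (schwartzCurl u k)) x‖ ≤ b * (2 : ℝ) ^ (j * α)) →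
        |vortexStretch u| ≤ 1 / 2 * gradL2NormSq (schwartzCurl u) +
          C * b ^ (2 / (2 - α)) * l2NormSq (schwartzCurl u) := by
  obtain ⟨K, K_nonneg, hK⟩ := hχ.exists_biotSavart_bound
  obtain ⟨C, C_nonneg, hC⟩ := hχ.exists_quadratic_form_bound (ι := Fin 3) hα hα1
  refine ⟨C * K ^ (2 / (2 - α)), by positivity, fun u hu b b_nonneg hb ↦ ?_⟩
  simp only [complexify_schwartzCurl] at hb
  have gradient_block_le (k i : Fin 3) (j : ℤ) (x : E3) :
      ‖lpBlock χ j (∂_{EuclideanSpace.single i (1 : ℝ)} (complexify (u k))) x‖ ≤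
        K * b * (2 : ℝ) ^ (j * α) := by
    rw [mul_assoc]
    exact hK _ (sum_lineDerivOp_complexify_eq_zero hu) j _ (fun k ↦ hb k j) i k x
  rw [← Real.norm_eq_abs, ← Complex.norm_real, ofReal_vortexStretch_eq_sum, mul_assoc C,
    ← Real.mul_rpow K_nonneg b_nonneg]
  exact hC _ (schwartzCurl u) (K * b) (by positivity) gradient_block_le

theorem vecL2_rpow_two (v : Fin 3 → 𝓢(E3, ℝ)) :
    vecL2 (fun k ↦ v k) ^ (2 : ℝ) = ENNReal.ofReal (l2NormSq v) := by
  rw [vecL2, ← ENNReal.rpow_mul, one_div_mul_cancel two_ne_zero, ENNReal.rpow_one, l2NormSq,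
    ENNReal.ofReal_sum_of_nonneg fun k _ ↦ integral_nonneg fun _ ↦ sq_nonneg _]
  simp only [eLpNorm_two_rpow_two]

theorem gradL2_rpow_two (v : Fin 3 → 𝓢(E3, ℝ)) :
    gradL2 (fun k ↦ v k) ^ (2 : ℝ) = ENNReal.ofReal (gradL2NormSq v) := by
  rw [gradL2, ← ENNReal.rpow_mul, one_div_mul_cancel two_ne_zero, ENNReal.rpow_one, gradL2NormSq,
    ENNReal.ofReal_sum_of_nonneg fun l _ ↦ l2NormSq_nonneg _]
  refine Finset.sum_congr rfl fun l _ ↦ ?_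
  rw [l2NormSq, ENNReal.ofReal_sum_of_nonneg fun k _ ↦ integral_nonneg fun _ ↦ sq_nonneg _]
  simp only [pd_coe, eLpNorm_two_rpow_two]

theorem IsLPCutoff.norm_lpBlock_le_of_vecBesovInf_ne_top {χ : E3 → ℝ} (hχ : IsLPCutoff χ) {s : ℝ}
    {v : Fin 3 → 𝓢(E3, ℝ)} (hv : vecBesovInf χ (-s) (fun k ↦ v k) ≠ ∞) (k : Fin 3) (j : ℤ)
    (x : E3) :
    ‖lpBlock χ j (complexify (v k)) x‖ ≤
      (vecBesovInf χ (-s) fun k ↦ v k).toReal * (2 : ℝ) ^ (j * s) := by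
  refine norm_le_of_eLpNorm_top_le _ (by positivity) ?_ x
  rw [hχ.coe_lpBlock, ENNReal.ofReal_mul ENNReal.toReal_nonneg, ENNReal.ofReal_toReal hv,
    ← ENNReal.ofReal_rpow_of_pos two_pos, ENNReal.ofReal_ofNat]
  have weighted_le : (2 : ℝ≥0∞) ^ ((j : ℝ) * -s) * eLpNorm (Dproj χ j (complexify (v k))) ⊤ volume ≤
      vecBesovInf χ (-s) fun k ↦ v k :=
    le_iSup₂_of_le (f := fun (i : Fin 3) (j : ℤ) ↦ (2 : ℝ≥0∞) ^ ((j : ℝ) * -s) *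
      eLpNorm (Dproj χ j fun x ↦ ((v i x : ℝ) : ℂ)) ⊤ volume) k j le_rfl
  calc eLpNorm (Dproj χ j (complexify (v k))) ⊤ volume
      = (2 : ℝ≥0∞) ^ ((j : ℝ) * -s) * eLpNorm (Dproj χ j (complexify (v k))) ⊤ volume *
          (2 : ℝ≥0∞) ^ ((j : ℝ) * s) := by
        rw [mul_right_comm, ← ENNReal.rpow_add _ _ two_ne_zero ENNReal.ofNat_ne_top, mul_neg,
          neg_add_cancel, ENNReal.rpow_zero, one_mul]
    _ ≤ _ := by gcongr

theorem ofReal_half_mul_add_mul_toReal_rpow_mul {C X Y p : ℝ} {B : ℝ≥0∞} (hC : 0 ≤ C) (hX : 0 ≤ X)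
    (hY : 0 ≤ Y) (hp : 0 ≤ p) (hB : B ≠ ⊤) :
    ENNReal.ofReal (1 / 2 * Y + C * B.toReal ^ p * X) =
      (1 / 2 : ℝ≥0∞) * ENNReal.ofReal Y + ENNReal.ofReal C * ENNReal.ofReal X * B ^ p := by
  rw [ENNReal.ofReal_add (by positivity) (by positivity), ENNReal.ofReal_mul (by positivity),
    ENNReal.ofReal_mul (by positivity), ENNReal.ofReal_mul hC,
    ← ENNReal.ofReal_rpow_of_nonneg ENNReal.toReal_nonneg hp, ENNReal.ofReal_toReal hB,
    mul_right_comm, ENNReal.ofReal_div_of_pos two_pos, ENNReal.ofReal_one, ENNReal.ofReal_ofNat]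

theorem vortex_stretch_young_estimate_general
    (χ : E3 → ℝ) (hχ : IsLPCutoff χ) (α : ℝ) (hα : 0 < α) (hα1 : α < 1) :
    ∃ C : ℝ≥0∞, 0 < C ∧ C < ∞ ∧
      ∀ u : Fin 3 → 𝓢(E3, ℝ), (∀ x, ∑ i : Fin 3, pd i (⇑(u i)) x = 0) →
        ENNReal.ofReal |vortexStretch u| ≤
          (1 / 2 : ℝ≥0∞) * gradL2 (curlS u) ^ (2 : ℝ)
            + C * vecL2 (curlS u) ^ (2 : ℝ) * vecBesovInf χ (-α) (curlS u) ^ (2 / (2 - α)) := by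
  obtain ⟨C, C_nonneg, hC⟩ := hχ.exists_abs_vortexStretch_le hα hα1
  have exponent_pos : 0 < 2 / (2 - α) := div_pos two_pos (by linarith)
  have C_add_one_pos : 0 < C + 1 := by positivity
  refine ⟨ENNReal.ofReal (C + 1), ENNReal.ofReal_pos.2 C_add_one_pos, ENNReal.ofReal_lt_top,
    fun u hu ↦ ?_⟩
  rw [curlS_eq_schwartzCurl, vecL2_rpow_two, gradL2_rpow_two]
  set X := l2NormSq (schwartzCurl u)
  set B := vecBesovInf χ (-α) fun k ↦ schwartzCurl u k
  have X_nonneg : 0 ≤ X := l2NormSq_nonneg _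
  rcases X_nonneg.eq_or_lt with X_zero | X_pos
  · simp [vortexStretch_eq_zero (eq_zero_of_l2NormSq_eq_zero X_zero.symm)]
  rcases eq_or_ne B ∞ with B_top | B_ne_top
  · rw [B_top, ENNReal.top_rpow_of_pos exponent_pos, ENNReal.mul_top, add_top]
    · exact le_top
    · exact mul_ne_zero (ENNReal.ofReal_pos.2 C_add_one_pos).ne' (ENNReal.ofReal_pos.2 X_pos).ne'
  have stretch_le := hC u hu _ ENNReal.toReal_nonneg
    (hχ.norm_lpBlock_le_of_vecBesovInf_ne_top B_ne_top)
  calc ENNReal.ofReal |vortexStretch u|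
      ≤ ENNReal.ofReal (1 / 2 * gradL2NormSq (schwartzCurl u) + C * B.toReal ^ (2 / (2 - α)) * X) :=
        ENNReal.ofReal_le_ofReal stretch_le
    _ = (1 / 2 : ℝ≥0∞) * ENNReal.ofReal (gradL2NormSq (schwartzCurl u)) +
          ENNReal.ofReal C * ENNReal.ofReal X * B ^ (2 / (2 - α)) :=
        ofReal_half_mul_add_mul_toReal_rpow_mul C_nonneg X_nonneg (gradL2NormSq_nonneg _)
          exponent_pos.le B_ne_top
    _ ≤ _ := by
        gcongr
        exact le_add_of_nonneg_right zero_le_one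

end VortexStretching

/-- **Estimate (3.11)**: for `0 < α < 1` there is a constant `C > 0` such that for
every divergence-free Schwartz vector field `u` on `ℝ³` with vorticity `ω = curl u`,
`|∫ ((ω·∇)u)·ω dx| ≤ (1/2) ‖∇ω‖_{L²}² + C ‖ω‖_{L²}²
(‖ω‖_{Ḃ^{-1-α}_{∞,∞}}^{2/(1-α)} + ‖ω‖_{Ḃ^{-α}_{∞,∞}}^{2/(2-α)})`. -/
theorem vortex_stretch_young_estimate
    (χ : E3 → ℝ) (hχ : IsLPCutoff χ) (α : ℝ) (hα : 0 < α) (hα1 : α < 1) :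
    ∃ C : ℝ≥0∞, 0 < C ∧ C < ∞ ∧
      ∀ u : Fin 3 → 𝓢(E3, ℝ), (∀ x, ∑ i : Fin 3, pd i (⇑(u i)) x = 0) →
        ENNReal.ofReal |vortexStretch u| ≤
          (1 / 2 : ℝ≥0∞) * gradL2 (curlS u) ^ (2 : ℝ)
            + C * vecL2 (curlS u) ^ (2 : ℝ) *
              (vecBesovInf χ (-1 - α) (curlS u) ^ (2 / (1 - α))
                + vecBesovInf χ (-α) (curlS u) ^ (2 / (2 - α))) := by
  obtain ⟨C, C_pos, C_lt_top, hC⟩ := vortex_stretch_young_estimate_general χ hχ α hα hα1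
  exact ⟨C, C_pos, C_lt_top, fun u hu ↦ (hC u hu).trans (by gcongr; exact le_add_self)⟩
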